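/- Let E be a finite group and Z a subgroup of the center of E such that the quotient E/Z is abelian and the orders |Z| and [E:Z] are coprime. Then there exists a subgroup H of E with Z ∩ H = {1} and E = ZH (so E is the internal direct product of Z and H), and the quotient map E → E/Z restricts to an isomorphism from H onto E/Z. -/

import Mathlib

-- `Nat.card` and `Subgroup.index` take the value `0` in the infinite case, so for infinite `E`
-- coprimality means `N = ⊥` or `N = ⊤`.
theorem stmt5_general {E : Type*} [Group E] (N : Subgroup E) [N.Normal]
    (hcop : Nat.Coprime (Nat.card N) N.index) :
    ∃ H : Subgroup E, N ⊓ H = ⊥ ∧ N ⊔ H = ⊤ ∧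
      Function.Bijective (fun h : H => (QuotientGroup.mk (h : E) : E ⧸ N)) := by
  obtain ⟨H, hNH⟩ := Subgroup.exists_right_complement'_of_coprime hcop
  exact ⟨H, hNH.disjoint.eq_bot, hNH.sup_eq_top,
    Subgroup.isComplement_subgroup_right_iff_bijective.mp hNH.symm⟩

/-- Let `E` be a finite group and `Z` a subgroup of the center of `E` such that `E/Z` is
abelian and `|Z|` and `[E:Z]` are coprime. Then there exists a subgroup `H` of `E` with
`Z ∩ H = 1` and `E = ZH`, and the quotient map `E → E/Z` restricts to an isomorphism
from `H` onto `E/Z`. -/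
theorem stmt5 {E : Type*} [Group E] [Finite E] (Z : Subgroup E) [Z.Normal]
    (hZ : Z ≤ Subgroup.center E)
    (hab : ∀ a b : E ⧸ Z, a * b = b * a)
    (hcop : Nat.Coprime (Nat.card Z) Z.index) :
    ∃ H : Subgroup E, Z ⊓ H = ⊥ ∧ Z ⊔ H = ⊤ ∧
      Function.Bijective (fun h : H => (QuotientGroup.mk (h : E) : E ⧸ Z)) :=
  stmt5_general Z hcop
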